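/- Let 2 ≤ k < n, let H₀ ∈ Σ_k, and let U be a unitary with U⁻¹H₀U = Λ₀ = diag(λ_1(H₀),…,λ_n(H₀)). Let D ≠ 0 be a real diagonal matrix with tr(D) = 0, D_{jj} = 0 for j > k, and D_{11} ≤ D_{22} ≤ … ≤ D_{kk}. Define H(t) = U(Λ₀ + tD)U⁻¹. Then for all sufficiently small t ≠ 0, λ_k(H(t)) < λ_{k+1}(H(t)) and (H(t))_Σ = H₀; in particular, H₀ is the unique closest point of Σ_k to H(t) in Frobenius distance. -/

import Mathlib

open Matrix

noncomputable section

/-- Sorted eigenvalues (increasing, counted with multiplicity) of a Hermitian matrix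
(junk value for non-Hermitian matrices). -/
def eigs {n : ℕ} (H : Matrix (Fin n) (Fin n) ℂ) : Fin n → ℝ :=
  if hH : H.IsHermitian then hH.eigenvalues ∘ Tuple.sort hH.eigenvalues else fun _ => 0

/-- Frobenius norm of a complex matrix. -/
def frobNorm {n : ℕ} (M : Matrix (Fin n) (Fin n) ℂ) : ℝ :=
  Real.sqrt (∑ a, ∑ b, ‖M a b‖ ^ 2)

/-- Mean of the lowest k eigenvalues. -/
def lamBar {n : ℕ} (k : ℕ) (H : Matrix (Fin n) (Fin n) ℂ) : ℝ :=
  (∑ j : Fin n, if (j : ℕ) < k then eigs H j else 0) / k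

/-- `Λ_Σ`: the diagonal of sorted eigenvalues, with the lowest k entries replaced
by their mean. -/
def LambdaSigma {n : ℕ} (k : ℕ) (H : Matrix (Fin n) (Fin n) ℂ) : Matrix (Fin n) (Fin n) ℂ :=
  Matrix.diagonal fun i => if (i : ℕ) < k then (lamBar k H : ℂ) else (eigs H i : ℂ)

/-- The set Σ_k of k-fold ground-state degenerate Hermitian matrices:
λ₁ = … = λ_k < λ_{k+1}. -/
def SigmaSet (n k : ℕ) : Set (Matrix (Fin n) (Fin n) ℂ) :=
  {H | H.IsHermitian ∧ (∀ i j : Fin n, (i : ℕ) < k → (j : ℕ) < k → eigs H i = eigs H j) ∧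
    ∀ i j : Fin n, (i : ℕ) < k → (j : ℕ) = k → eigs H i < eigs H j}

/-!
Write `H = U diag(μ) U⁻¹` and `G = V diag(g) V⁻¹`. Then `‖H - G‖² = ∑ᵢⱼ Pᵢⱼ (μᵢ - gⱼ)²`, where
`Pᵢⱼ = |(U⁻¹V)ᵢⱼ|²` is doubly stochastic, so the comparison of `G` with `H_Σ` is a question about
real numbers. Let `ν` be `μ` with the `k` lowest levels (the set `s`) averaged, and let `t` index
the `k` lowest levels of `G`, all equal to `a`. Averaging preserves sums, so subtracting
`‖H - H_Σ‖²` leaves `∑ᵢⱼ Pᵢⱼ fᵢⱼ` with `fᵢⱼ = (νᵢ - gⱼ)² - 2 (μᵢ - νᵢ) (gⱼ - a)`. Only on `s × tᶜ`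
can `f` be negative; since `#s = #t`, this block carries the same `P`-mass as `sᶜ × t`, and a
value of `f` on the one block plus a value on the other is always positive. Hence `H_Σ` is the
unique closest point of `Σ_k` to `H` as soon as `H` has a gap above its `k` lowest levels, and a
small traceless spreading of the ground level of `H₀` keeps the gap and has `H_Σ = H₀`.
-/

open Finset
open scoped Matrix.Norms.Frobenius BigOperators

section AverageOn

variable {ι : Type*} [DecidableEq ι]

/-- The tuple `μ` with all its entries on `s` replaced by their mean; on the sorted eigenvalues of
`H` and the indices of its `k` lowest levels, this is the passage from `Λ` to `Λ_Σ`. -/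
def averageOn (s : Finset ι) (μ : ι → ℝ) (i : ι) : ℝ :=
  if i ∈ s then 𝔼 j ∈ s, μ j else μ i

lemma sum_averageOn [Fintype ι] (s : Finset ι) (μ : ι → ℝ) : ∑ i, averageOn s μ i = ∑ i, μ i := by
  have hs : ∑ i ∈ s, averageOn s μ i = ∑ i ∈ s, μ i := by
    rw [← card_smul_expect s μ, ← sum_const]
    exact sum_congr rfl fun i hi => if_pos hi
  have hsc : ∑ i ∈ sᶜ, averageOn s μ i = ∑ i ∈ sᶜ, μ i :=
    sum_congr rfl fun i hi => if_neg (mem_compl.1 hi)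
  rw [← sum_add_sum_compl s, hs, hsc, sum_add_sum_compl]

lemma sum_sub_averageOn_mul_averageOn_sub [Fintype ι] (s : Finset ι) (μ : ι → ℝ)
    (a : ℝ) :
    ∑ i, (μ i - averageOn s μ i) * (averageOn s μ i - a) = 0 := by
  have hconst : ∀ i, (μ i - averageOn s μ i) * (averageOn s μ i - a)
      = (μ i - averageOn s μ i) * (𝔼 j ∈ s, μ j - a) := fun i => by
    by_cases hi : i ∈ s <;> simp [averageOn, hi]
  simp only [hconst, ← sum_mul, sum_sub_distrib, sum_averageOn, sub_self, zero_mul]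

lemma averageOn_comp_perm {s : Finset ι} {σ : Equiv.Perm ι} (hσ : ∀ i, σ i ∈ s ↔ i ∈ s)
    (μ : ι → ℝ) : averageOn s (μ ∘ σ) = averageOn s μ ∘ σ := by
  have hmean : 𝔼 j ∈ s, μ (σ j) = 𝔼 j ∈ s, μ j :=
    expect_bij (fun j _ => σ j) (by simp [hσ]) (by simp) (by simp)
      fun j hj => ⟨σ.symm j, (hσ _).1 (by simpa using hj), by simp⟩
  ext i
  simp only [averageOn, Function.comp_apply, hmean, hσ]

lemma averageOn_eq_self_add {s : Finset ι} {ν d : ι → ℝ} (hν : ∀ i ∈ s, ∀ j ∈ s, ν i = ν j)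
    (hd : ∑ i ∈ s, d i = 0) (hdc : ∀ i ∉ s, d i = 0) : averageOn s (ν + d) = ν := by
  ext i
  by_cases hi : i ∈ s
  · have hmean : 𝔼 j ∈ s, ν j = ν i := by
      rw [expect_congr rfl fun j hj => hν j hj i hi, expect_const ⟨i, hi⟩]
    simp [averageOn, hi, expect_add_distrib, hmean, expect_eq_sum_div_card s d, hd]
  · simp [averageOn, hi, hdc i hi]

lemma averageOn_eq_of_eq {s : Finset ι} {μ : ι → ℝ} {θ : ℝ}
    (hμ : ∀ i, μ i < θ ↔ i ∈ s) {i j : ι} (hij : μ i = μ j) :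
    averageOn s μ i = averageOn s μ j := by
  simp only [averageOn, ← hμ, hij]

lemma averageOn_lt {s : Finset ι} {μ : ι → ℝ} {θ : ℝ} (hμ : ∀ i, μ i < θ ↔ i ∈ s) {i : ι}
    (hi : i ∈ s) : averageOn s μ i < θ := by
  rw [averageOn, if_pos hi]
  exact expect_lt (fun j hj => ((hμ j).2 hj).le) ⟨i, hi, (hμ i).2 hi⟩

end AverageOn

section DoublyStochastic

variable {ι : Type*} [DecidableEq ι]

/-- In terms of optimal transport, `κ (1_s(i) - 1_t(j))` is a dual potential making the cost `f`
positive off the diagonal blocks `s × t` and `sᶜ × tᶜ`. -/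
lemma exists_dual_potential [Finite ι] {s t : Finset ι} {f : ι → ι → ℝ}
    (hf : ∀ i ∈ s, ∀ j ∉ t, ∀ i' ∉ s, ∀ j' ∈ t, 0 < f i j + f i' j') :
    ∃ κ, ∀ i j, ¬ (i ∈ s ↔ j ∈ t) →
      0 < f i j + (if i ∈ s then κ else 0) + (if j ∈ t then -κ else 0) := by
  have := Fintype.ofFinite ι
  obtain ⟨κ, hlow, hupp⟩ := Order.exists_between_finsets
    ((s ×ˢ tᶜ).image fun x => -f x.1 x.2) ((sᶜ ×ˢ t).image fun x => f x.1 x.2) (by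
      simp only [mem_image, mem_product, mem_compl, Prod.exists]
      rintro _ ⟨i, j, ⟨hi, hj⟩, rfl⟩ _ ⟨i', j', ⟨hi', hj'⟩, rfl⟩
      linarith [hf i hi j hj i' hi' j' hj'])
  refine ⟨κ, fun i j hij => ?_⟩
  by_cases hi : i ∈ s <;> by_cases hj : j ∈ t <;> simp only [hi, hj, if_true, if_false]
  · exact absurd (iff_of_true hi hj) hij
  · linarith [hlow _ (mem_image_of_mem _ (mk_mem_product hi (mem_compl.2 hj)))]
  · linarith [hupp _ (mem_image_of_mem _ (mk_mem_product (mem_compl.2 hi) hj))]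
  · exact absurd (iff_of_false hi hj) hij

variable [Fintype ι] {P : Matrix ι ι ℝ}

lemma sum_mul_add_add_of_mem_doublyStochastic (hP : P ∈ doublyStochastic ℝ ι)
    (f : ι → ι → ℝ) (u v : ι → ℝ) :
    ∑ i, ∑ j, P i j * (f i j + u i + v j) = ∑ i, ∑ j, P i j * f i j + ∑ i, u i + ∑ j, v j := by
  have hu : ∑ i, ∑ j, P i j * u i = ∑ i, u i := by
    simp only [← sum_mul, sum_row_of_mem_doublyStochastic hP, one_mul]
  have hv : ∑ i, ∑ j, P i j * v j = ∑ j, v j := by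
    rw [sum_comm]
    simp only [← sum_mul, sum_col_of_mem_doublyStochastic hP, one_mul]
  simp only [mul_add, sum_add_distrib, hu, hv]

lemma sum_mul_pos_of_mem_doublyStochastic (hP : P ∈ doublyStochastic ℝ ι) {s t : Finset ι}
    (hst : #s = #t) {f : ι → ι → ℝ} (hdiag : ∀ i j, (i ∈ s ↔ j ∈ t) → 0 ≤ f i j)
    (hcross : ∀ i ∈ s, ∀ j ∉ t, ∀ i' ∉ s, ∀ j' ∈ t, 0 < f i j + f i' j')
    (hne : ∃ i j, P i j ≠ 0 ∧ ((i ∈ s ↔ j ∈ t) → f i j ≠ 0)) :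
    0 < ∑ i, ∑ j, P i j * f i j := by
  obtain ⟨κ, hκ⟩ := exists_dual_potential hcross
  set F : ι → ι → ℝ := fun i j =>
    f i j + (if i ∈ s then κ else 0) + (if j ∈ t then -κ else 0) with hF
  have hsum : ∑ i, ∑ j, P i j * F i j = ∑ i, ∑ j, P i j * f i j := by
    rw [sum_mul_add_add_of_mem_doublyStochastic hP]
    simp [hst]
  have hF_eq : ∀ i j, (i ∈ s ↔ j ∈ t) → F i j = f i j := fun i j hij => by
    by_cases hj : j ∈ t <;> simp [hF, hij, hj]
  have hF_nonneg : ∀ i j, 0 ≤ F i j := fun i j => by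
    by_cases hij : i ∈ s ↔ j ∈ t
    · exact (hdiag i j hij).trans_eq (hF_eq i j hij).symm
    · exact (hκ i j hij).le
  have hPF_nonneg : ∀ i j, 0 ≤ P i j * F i j := fun i j =>
    mul_nonneg (nonneg_of_mem_doublyStochastic hP) (hF_nonneg i j)
  obtain ⟨i, j, hPij, hfij⟩ := hne
  have hFij : F i j ≠ 0 := by
    by_cases hij : i ∈ s ↔ j ∈ t
    · exact hF_eq i j hij ▸ hfij hij
    · exact (hκ i j hij).ne'
  rw [← hsum]
  exact sum_pos' (fun i _ => sum_nonneg fun j _ => hPF_nonneg i j) ⟨i, mem_univ i,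
    sum_pos' (fun j _ => hPF_nonneg i j) ⟨j, mem_univ j,
      (hPF_nonneg i j).lt_of_ne' (mul_ne_zero hPij hFij)⟩⟩

/-- Exchanging the partners of `c` and `y` turns `(c - x)² + (y - a)²` into `(c - a)² + (y - x)²`
and leaves the surplus `2 (y - c) (x - a)`, which dominates the linear term. -/
lemma exchange_pos {a c x y z : ℝ} (hc : c < y) (hz : z < y) (hx : a ≤ x) :
    0 < (c - x) ^ 2 - 2 * (z - c) * (x - a) + (y - a) ^ 2 := by
  have hswap : (c - x) ^ 2 - 2 * (z - c) * (x - a) + (y - a) ^ 2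
      = (c - a) ^ 2 + (y - x) ^ 2 + 2 * ((y - z) * (x - a)) := by ring
  rw [hswap]
  rcases hx.eq_or_lt with rfl | hx
  · nlinarith [sq_nonneg (c + y - 2 * a), mul_pos (sub_pos.2 hc) (sub_pos.2 hc)]
  · have := mul_pos (sub_pos.2 hz) (sub_pos.2 hx)
    positivity

lemma sum_mul_sq_sub_of_mem_doublyStochastic (hP : P ∈ doublyStochastic ℝ ι) (s : Finset ι)
    (μ g : ι → ℝ) (a : ℝ) :
    ∑ i, ∑ j, P i j * (μ i - g j) ^ 2
      = ∑ i, ∑ j, P i j * ((averageOn s μ i - g j) ^ 2 - 2 * (μ i - averageOn s μ i) * (g j - a))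
        + ∑ i, (μ i - averageOn s μ i) ^ 2 := by
  set ν := averageOn s μ with hν
  calc ∑ i, ∑ j, P i j * (μ i - g j) ^ 2
      = ∑ i, ∑ j, P i j * ((ν i - g j) ^ 2 - 2 * (μ i - ν i) * (g j - a)
          + ((μ i - ν i) ^ 2 + 2 * ((μ i - ν i) * (ν i - a))) + 0) := by
        refine sum_congr rfl fun i _ => sum_congr rfl fun j _ => ?_
        ring
    _ = ∑ i, ∑ j, P i j * ((ν i - g j) ^ 2 - 2 * (μ i - ν i) * (g j - a))
          + ∑ i, (μ i - ν i) ^ 2 := by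
        rw [sum_mul_add_add_of_mem_doublyStochastic hP, sum_add_distrib, ← mul_sum, hν,
          sum_sub_averageOn_mul_averageOn_sub, mul_zero, add_zero, sum_const_zero, add_zero]

lemma sum_sq_sub_averageOn_lt_of_mem_doublyStochastic (hP : P ∈ doublyStochastic ℝ ι)
    {s t : Finset ι} (hst : #s = #t) {μ g : ι → ℝ} {θ a : ℝ} (hμ : ∀ i, μ i < θ ↔ i ∈ s)
    (hgt : ∀ j ∈ t, g j = a) (hg : ∀ j, a ≤ g j)
    (hne : ∃ i j, P i j ≠ 0 ∧ averageOn s μ i ≠ g j) :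
    ∑ i, (μ i - averageOn s μ i) ^ 2 < ∑ i, ∑ j, P i j * (μ i - g j) ^ 2 := by
  set ν := averageOn s μ
  have hνc : ∀ i ∉ s, ν i = μ i := fun i hi => if_neg hi
  set f : ι → ι → ℝ := fun i j => (ν i - g j) ^ 2 - 2 * (μ i - ν i) * (g j - a) with hf
  have hf_sq : ∀ i j, i ∉ s ∨ j ∈ t → f i j = (ν i - g j) ^ 2 := by
    rintro i j (hi | hj)
    · simp [hf, hνc i hi]
    · simp [hf, hgt j hj]
  have hdiag : ∀ i j, (i ∈ s ↔ j ∈ t) → 0 ≤ f i j := fun i j hij => by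
    rw [hf_sq i j (by tauto)]
    positivity
  have hcross : ∀ i ∈ s, ∀ j ∉ t, ∀ i' ∉ s, ∀ j' ∈ t, 0 < f i j + f i' j' := by
    intro i hi j _ i' hi' j' hj'
    have hθ : θ ≤ μ i' := not_lt.1 (mt (hμ i').1 hi')
    rw [hf_sq i' j' (Or.inl hi'), hνc i' hi', hgt j' hj']
    exact exchange_pos ((averageOn_lt hμ hi).trans_le hθ) (((hμ i).2 hi).trans_le hθ) (hg j)
  have hne' : ∃ i j, P i j ≠ 0 ∧ ((i ∈ s ↔ j ∈ t) → f i j ≠ 0) := by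
    obtain ⟨i, j, hPij, hij⟩ := hne
    refine ⟨i, j, hPij, fun h => ?_⟩
    rw [hf_sq i j (by tauto)]
    exact pow_ne_zero 2 (sub_ne_zero.2 hij)
  rw [sum_mul_sq_sub_of_mem_doublyStochastic hP s μ g a]
  exact lt_add_of_pos_left _ (sum_mul_pos_of_mem_doublyStochastic hP hst hdiag hcross hne')

end DoublyStochastic

section UnitaryConjugation

variable {ι 𝕜 : Type*} [Fintype ι] [DecidableEq ι] [RCLike 𝕜]

/-- The Hermitian matrix `U diag(μ) U⁻¹`, whose eigenvectors are the columns of `U`. -/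
def conjDiagonal (U : unitaryGroup ι 𝕜) (μ : ι → ℝ) : Matrix ι ι 𝕜 :=
  U * diagonal (fun i => (μ i : 𝕜)) * star (U : Matrix ι ι 𝕜)

lemma conjDiagonal_eq_mul_inv (U : unitaryGroup ι 𝕜) (μ : ι → ℝ) :
    conjDiagonal U μ = U * diagonal (fun i => (μ i : 𝕜)) * (U : Matrix ι ι 𝕜)⁻¹ := by
  rw [inv_eq_left_inv (UnitaryGroup.star_mul_self U), conjDiagonal]

lemma conjDiagonal_eq_of_inv_mul_mul_eq {U : unitaryGroup ι 𝕜} {H : Matrix ι ι 𝕜} {μ : ι → ℝ}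
    (h : (U : Matrix ι ι 𝕜)⁻¹ * H * U = diagonal fun i => (μ i : 𝕜)) : conjDiagonal U μ = H := by
  have hU : IsUnit (U : Matrix ι ι 𝕜).det := UnitaryGroup.det_isUnit U
  rw [conjDiagonal_eq_mul_inv, ← h, mul_assoc, mul_nonsing_inv_cancel_right _ _ hU,
    mul_nonsing_inv_cancel_left _ _ hU]

lemma isHermitian_conjDiagonal (U : unitaryGroup ι 𝕜) (μ : ι → ℝ) :
    (conjDiagonal U μ).IsHermitian :=
  isHermitian_mul_mul_conjTranspose _ <|
    isHermitian_diagonal_iff.2 fun i => RCLike.conj_ofReal (μ i)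

lemma exists_eq_conjDiagonal {H : Matrix ι ι 𝕜} (hH : H.IsHermitian) :
    ∃ (U : unitaryGroup ι 𝕜) (μ : ι → ℝ), H = conjDiagonal U μ :=
  ⟨hH.eigenvectorUnitary, hH.eigenvalues, hH.spectral_theorem⟩

lemma charpoly_conjDiagonal (U : unitaryGroup ι 𝕜) (μ : ι → ℝ) :
    (conjDiagonal U μ).charpoly = ∏ i, (Polynomial.X - Polynomial.C (μ i : 𝕜)) := by
  rw [conjDiagonal, charpoly_mul_comm, ← mul_assoc, UnitaryGroup.star_mul_self, one_mul,
    charpoly_diagonal]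

/-- The unistochastic matrix of `W`, with entries `|W i j|²`. -/
def unistochastic (W : unitaryGroup ι 𝕜) : Matrix ι ι ℝ :=
  of fun i j => ‖W i j‖ ^ 2

lemma unistochastic_mem_doublyStochastic (W : unitaryGroup ι 𝕜) :
    unistochastic W ∈ doublyStochastic ℝ ι := by
  have hrow : ∀ (W : unitaryGroup ι 𝕜) (i : ι), ∑ j, ‖W i j‖ ^ 2 = 1 := fun W i => by
    have h := congrFun (congrFun (mem_unitaryGroup_iff.1 W.2) i) i
    simp only [mul_apply, star_apply, RCLike.star_def, RCLike.mul_conj, one_apply_eq] at h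
    exact_mod_cast h
  refine mem_doublyStochastic_iff_sum.2 ⟨fun i j => sq_nonneg _, hrow W, fun j => ?_⟩
  simpa [unistochastic, star_apply] using hrow W⁻¹ j

lemma unistochastic_one : unistochastic (1 : unitaryGroup ι 𝕜) = 1 := by
  ext i j
  by_cases h : i = j <;> simp [unistochastic, one_apply, h]

lemma frobenius_norm_sq {m n : Type*} [Fintype m] [Fintype n] (A : Matrix m n 𝕜) :
    ‖A‖ ^ 2 = ∑ i, ∑ j, ‖A i j‖ ^ 2 := by
  rw [frobenius_norm_def, ← Real.sqrt_eq_rpow, Real.sq_sqrt (by positivity)]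
  simp only [Real.rpow_two]

lemma frobenius_norm_unitary_mul (U : unitaryGroup ι 𝕜) (A : Matrix ι ι 𝕜) :
    ‖(U : Matrix ι ι 𝕜) * A‖ = ‖A‖ := by
  have htrace : ∀ B : Matrix ι ι 𝕜, ((‖B‖ ^ 2 : ℝ) : 𝕜) = (star B * B).trace := fun B => by
    rw [frobenius_norm_sq, sum_comm]
    simp [trace, mul_apply, RCLike.conj_mul]
  have hsq : ((‖(U : Matrix ι ι 𝕜) * A‖ ^ 2 : ℝ) : 𝕜) = ((‖A‖ ^ 2 : ℝ) : 𝕜) := by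
    rw [htrace, htrace, star_mul, mul_assoc, ← mul_assoc (star (U : Matrix ι ι 𝕜)),
      UnitaryGroup.star_mul_self, one_mul]
  exact (sq_eq_sq₀ (norm_nonneg _) (norm_nonneg _)).1 (RCLike.ofReal_injective hsq)

lemma frobenius_norm_mul_unitary (A : Matrix ι ι 𝕜) (U : unitaryGroup ι 𝕜) :
    ‖A * (U : Matrix ι ι 𝕜)‖ = ‖A‖ := by
  rw [← norm_star, star_mul, ← UnitaryGroup.inv_val, frobenius_norm_unitary_mul, norm_star]

lemma star_mul_conjDiagonal_sub_mul (U V : unitaryGroup ι 𝕜) (μ g : ι → ℝ) :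
    star (U : Matrix ι ι 𝕜) * (conjDiagonal U μ - conjDiagonal V g) * V
      = of fun i j => (U⁻¹ * V) i j * ((μ i - g j : ℝ) : 𝕜) := by
  have h : star (U : Matrix ι ι 𝕜) * (conjDiagonal U μ - conjDiagonal V g) * V
      = diagonal (fun i => (μ i : 𝕜)) * (star (U : Matrix ι ι 𝕜) * V)
        - star (U : Matrix ι ι 𝕜) * V * diagonal (fun i => (g i : 𝕜)) := by
    simp only [conjDiagonal, mul_sub, sub_mul, mul_assoc, UnitaryGroup.star_mul_self, mul_one]
    rw [← mul_assoc (star (U : Matrix ι ι 𝕜)) U, UnitaryGroup.star_mul_self, one_mul]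
  ext i j
  rw [h, Matrix.sub_apply, diagonal_mul, mul_diagonal, of_apply, UnitaryGroup.mul_val,
    UnitaryGroup.inv_val]
  push_cast
  ring

lemma frobenius_norm_conjDiagonal_sub_sq (U V : unitaryGroup ι 𝕜) (μ g : ι → ℝ) :
    ‖conjDiagonal U μ - conjDiagonal V g‖ ^ 2
      = ∑ i, ∑ j, unistochastic (U⁻¹ * V) i j * (μ i - g j) ^ 2 := by
  rw [← frobenius_norm_unitary_mul U⁻¹, ← frobenius_norm_mul_unitary _ V, UnitaryGroup.inv_val,
    star_mul_conjDiagonal_sub_mul, frobenius_norm_sq]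
  simp only [of_apply, unistochastic, norm_mul, mul_pow, RCLike.norm_ofReal, sq_abs]

lemma conjDiagonal_eq_conjDiagonal_iff {U V : unitaryGroup ι 𝕜} {μ g : ι → ℝ} :
    conjDiagonal U μ = conjDiagonal V g
      ↔ ∀ i j, unistochastic (U⁻¹ * V) i j = 0 ∨ μ i = g j := by
  have hnonneg : ∀ i j, 0 ≤ unistochastic (U⁻¹ * V) i j * (μ i - g j) ^ 2 := fun i j =>
    mul_nonneg (sq_nonneg _) (sq_nonneg _)
  rw [← sub_eq_zero, ← norm_eq_zero, ← sq_eq_zero_iff, frobenius_norm_conjDiagonal_sub_sq,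
    sum_eq_zero_iff_of_nonneg fun i _ => sum_nonneg fun j _ => hnonneg i j]
  simp [sum_eq_zero_iff_of_nonneg fun j _ => hnonneg _ j, sub_eq_zero]

lemma frobenius_norm_conjDiagonal_sub_averageOn_lt (U V : unitaryGroup ι 𝕜)
    {s t : Finset ι} (hst : #s = #t) {μ g : ι → ℝ} {θ a : ℝ} (hμ : ∀ i, μ i < θ ↔ i ∈ s)
    (hgt : ∀ j ∈ t, g j = a) (hg : ∀ j, a ≤ g j)
    (hne : conjDiagonal V g ≠ conjDiagonal U (averageOn s μ)) :
    ‖conjDiagonal U μ - conjDiagonal U (averageOn s μ)‖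
      < ‖conjDiagonal U μ - conjDiagonal V g‖ := by
  have hdiag : ‖conjDiagonal U μ - conjDiagonal U (averageOn s μ)‖ ^ 2
      = ∑ i, (μ i - averageOn s μ i) ^ 2 := by
    simp [frobenius_norm_conjDiagonal_sub_sq, unistochastic_one, one_apply]
  have hne' : ∃ i j, unistochastic (U⁻¹ * V) i j ≠ 0 ∧ averageOn s μ i ≠ g j := by
    simpa [conjDiagonal_eq_conjDiagonal_iff] using hne.symm
  refine lt_of_pow_lt_pow_left₀ 2 (norm_nonneg _) ?_
  rw [hdiag, frobenius_norm_conjDiagonal_sub_sq]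
  exact sum_sq_sub_averageOn_lt_of_mem_doublyStochastic
    (unistochastic_mem_doublyStochastic _) hst hμ hgt hg hne'

end UnitaryConjugation

section Eigs

variable {n k : ℕ}

/-- The indices `0, …, k - 1` of the `k` lowest levels (those numbered `1, …, k` on paper). -/
def ground (n k : ℕ) : Finset (Fin n) :=
  {i | (i : ℕ) < k}

lemma mem_ground {i : Fin n} : i ∈ ground n k ↔ (i : ℕ) < k := by
  simp [ground]

lemma card_ground : #(ground n k) = min n k :=
  Fin.card_filter_val_lt

lemma comp_sort_eq_comp_sort_of_map_eq {α : Type*} [LinearOrder α] {f g : Fin n → α}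
    (h : univ.val.map f = univ.val.map g) : f ∘ Tuple.sort f = g ∘ Tuple.sort g := by
  have hperm : (List.ofFn f).Perm (List.ofFn g) := by
    rwa [Fin.univ_val_map, Fin.univ_val_map, Multiset.coe_eq_coe] at h
  exact List.ofFn_injective <| (((Tuple.sort f).ofFn_comp_perm f).trans
    (hperm.trans ((Tuple.sort g).ofFn_comp_perm g).symm)).eq_of_pairwise'
      (Tuple.monotone_sort f).sortedLE_ofFn.pairwise (Tuple.monotone_sort g).sortedLE_ofFn.pairwise

lemma eigs_conjDiagonal (U : unitaryGroup (Fin n) ℂ) (μ : Fin n → ℝ) :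
    eigs (conjDiagonal U μ) = μ ∘ Tuple.sort μ := by
  have hH := isHermitian_conjDiagonal U μ
  have hroots : univ.val.map (Complex.ofReal ∘ hH.eigenvalues)
      = univ.val.map (Complex.ofReal ∘ μ) := by
    refine hH.roots_charpoly_eq_eigenvalues.symm.trans ?_
    rw [charpoly_conjDiagonal, Polynomial.roots_prod _ _
      (prod_ne_zero_iff.2 fun i _ => Polynomial.X_sub_C_ne_zero _)]
    simp
  rw [eigs, dif_pos hH]
  refine comp_sort_eq_comp_sort_of_map_eq (Multiset.map_injective Complex.ofReal_injective ?_)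
  rwa [Multiset.map_map, Multiset.map_map]

lemma monotone_eigs (H : Matrix (Fin n) (Fin n) ℂ) : Monotone (eigs H) := by
  unfold eigs
  split_ifs
  · exact Tuple.monotone_sort _
  · exact monotone_const

/-- `Σ_k` without the gap condition: the Hermitian matrices whose `k` lowest eigenvalues coincide.
These are the competitors in the distance comparison. -/
def degenerateSet (n k : ℕ) : Set (Matrix (Fin n) (Fin n) ℂ) :=
  {H | H.IsHermitian ∧ ∀ i j : Fin n, (i : ℕ) < k → (j : ℕ) < k → eigs H i = eigs H j}

lemma SigmaSet_subset_degenerateSet : SigmaSet n k ⊆ degenerateSet n k :=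
  fun _ hH => ⟨hH.1, hH.2.1⟩

lemma exists_eq_conjDiagonal_of_mem_degenerateSet (hk : 0 < k) (hkn : k ≤ n)
    {G : Matrix (Fin n) (Fin n) ℂ} (hG : G ∈ degenerateSet n k) :
    ∃ (V : unitaryGroup (Fin n) ℂ) (g : Fin n → ℝ) (t : Finset (Fin n)) (a : ℝ),
      G = conjDiagonal V g ∧ #t = #(ground n k) ∧ (∀ j ∈ t, g j = a) ∧ ∀ j, a ≤ g j := by
  obtain ⟨hherm, hdeg⟩ := hG
  obtain ⟨V, g, rfl⟩ := exists_eq_conjDiagonal hherm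
  have hn : 0 < n := hk.trans_le hkn
  have heigs : ∀ i, g (Tuple.sort g i) = eigs (conjDiagonal V g) i := fun i =>
    (congrFun (eigs_conjDiagonal V g) i).symm
  refine ⟨V, g, (ground n k).map (Tuple.sort g).toEmbedding, eigs (conjDiagonal V g) ⟨0, hn⟩,
    rfl, card_map _, ?_, fun j => ?_⟩
  · simp only [forall_mem_map, Equiv.coe_toEmbedding, heigs, mem_ground]
    exact fun i hi => hdeg i ⟨0, hn⟩ hi hk
  · rw [← (Tuple.sort g).apply_symm_apply j, heigs]
    exact monotone_eigs _ (Nat.zero_le _)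

lemma LambdaSigma_eq_diagonal_averageOn (hkn : k ≤ n) (H : Matrix (Fin n) (Fin n) ℂ) :
    LambdaSigma k H = diagonal fun i => (averageOn (ground n k) (eigs H) i : ℂ) := by
  have hmean : lamBar k H = 𝔼 i ∈ ground n k, eigs H i := by
    rw [expect_eq_sum_div_card, card_ground, min_eq_right hkn, lamBar, ground, sum_filter]
  simp only [LambdaSigma, averageOn, mem_ground, hmean, apply_ite Complex.ofReal]

lemma frobNorm_eq_norm (M : Matrix (Fin n) (Fin n) ℂ) : frobNorm M = ‖M‖ := by
  rw [frobNorm, ← frobenius_norm_sq, Real.sqrt_sq (norm_nonneg M)]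

section Cutoff

variable {μ : Fin n → ℝ} {θ : ℝ}

lemma sort_mem_ground_iff (hμ : ∀ i, μ i < θ ↔ i ∈ ground n k) (i : Fin n) :
    Tuple.sort μ i ∈ ground n k ↔ i ∈ ground n k := by
  have hcard : #{j | (μ ∘ Tuple.sort μ) j < θ} = min n k := by
    rw [← card_ground, ← card_map (Tuple.sort μ).toEmbedding]
    congr 1
    ext j
    simp [hμ]
  rw [← hμ, mem_ground, ← Function.comp_apply (f := μ),
    ← Tuple.lt_card_lt_iff_apply_lt_of_monotone (Tuple.monotone_sort μ), hcard]
  simp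

lemma eigs_conjDiagonal_lt_iff (U : unitaryGroup (Fin n) ℂ)
    (hμ : ∀ i, μ i < θ ↔ i ∈ ground n k) (i : Fin n) :
    eigs (conjDiagonal U μ) i < θ ↔ i ∈ ground n k := by
  rw [eigs_conjDiagonal, Function.comp_apply, hμ, sort_mem_ground_iff hμ]

lemma eigs_conjDiagonal_lt_of_mem_of_notMem (U : unitaryGroup (Fin n) ℂ)
    (hμ : ∀ i, μ i < θ ↔ i ∈ ground n k) {i j : Fin n} (hi : i ∈ ground n k) (hj : j ∉ ground n k) :
    eigs (conjDiagonal U μ) i < eigs (conjDiagonal U μ) j := by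
  have hlow := (eigs_conjDiagonal_lt_iff U hμ i).2 hi
  have hhigh := not_lt.1 (mt (eigs_conjDiagonal_lt_iff U hμ j).1 hj)
  exact hlow.trans_le hhigh

lemma mul_LambdaSigma_mul_inv_eq_conjDiagonal (hkn : k ≤ n) {U V : unitaryGroup (Fin n) ℂ}
    (hμ : ∀ i, μ i < θ ↔ i ∈ ground n k)
    (hV : conjDiagonal V (eigs (conjDiagonal U μ)) = conjDiagonal U μ) :
    (V : Matrix (Fin n) (Fin n) ℂ) * LambdaSigma k (conjDiagonal U μ)
        * (V : Matrix (Fin n) (Fin n) ℂ)⁻¹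
      = conjDiagonal U (averageOn (ground n k) μ) := by
  rw [LambdaSigma_eq_diagonal_averageOn hkn]
  refine (conjDiagonal_eq_mul_inv V (averageOn (ground n k) _)).symm.trans ?_
  rw [eigs_conjDiagonal] at hV ⊢
  rw [averageOn_comp_perm (sort_mem_ground_iff hμ)]
  -- Equal eigenvalues are averaged to equal values, so the diagonalising unitary is irrelevant.
  exact conjDiagonal_eq_conjDiagonal_iff.2 fun i j =>
    (conjDiagonal_eq_conjDiagonal_iff.1 hV i j).imp_right (averageOn_eq_of_eq hμ)

lemma frobNorm_conjDiagonal_sub_averageOn_lt (hk : 0 < k) (hkn : k ≤ n)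
    (U : unitaryGroup (Fin n) ℂ) (hμ : ∀ i, μ i < θ ↔ i ∈ ground n k)
    {G : Matrix (Fin n) (Fin n) ℂ} (hG : G ∈ degenerateSet n k)
    (hne : G ≠ conjDiagonal U (averageOn (ground n k) μ)) :
    frobNorm (conjDiagonal U μ - conjDiagonal U (averageOn (ground n k) μ))
      < frobNorm (conjDiagonal U μ - G) := by
  obtain ⟨V, g, t, a, rfl, hcard, hgt, hg⟩ := exists_eq_conjDiagonal_of_mem_degenerateSet hk hkn hG
  simp only [frobNorm_eq_norm]
  exact frobenius_norm_conjDiagonal_sub_averageOn_lt U V hcard.symm hμ hgt hg hne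

end Cutoff

lemma eigs_add_lt_iff {H : Matrix (Fin n) (Fin n) ℂ} {d : Fin n → ℝ} {hkn : k < n}
    (hsupp : ∀ j : Fin n, k ≤ (j : ℕ) → d j = 0)
    (hgap : ∀ i : Fin n, (i : ℕ) < k → eigs H i + d i < eigs H ⟨k, hkn⟩) (i : Fin n) :
    (eigs H + d) i < eigs H ⟨k, hkn⟩ ↔ i ∈ ground n k := by
  rw [mem_ground]
  refine ⟨fun hi => not_le.1 fun hki => hi.not_ge ?_, hgap i⟩
  rw [Pi.add_apply, hsupp i hki, add_zero]
  exact monotone_eigs H hki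

lemma averageOn_eigs_add {H : Matrix (Fin n) (Fin n) ℂ} (hH : H ∈ degenerateSet n k)
    {d : Fin n → ℝ} (hsum : ∑ i, d i = 0) (hsupp : ∀ j : Fin n, k ≤ (j : ℕ) → d j = 0) :
    averageOn (ground n k) (eigs H + d) = eigs H := by
  have hsupp' : ∀ i ∉ ground n k, d i = 0 := fun i hi => hsupp i (not_lt.1 (mt mem_ground.2 hi))
  refine averageOn_eq_self_add
    (fun i hi j hj => hH.2 i j (mem_ground.1 hi) (mem_ground.1 hj)) ?_ hsupp'
  rwa [sum_subset (subset_univ _) fun i _ => hsupp' i]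

end Eigs

lemma exists_pos_forall_abs_lt_add_mul_lt {ι : Type*} (s : Finset ι) {a b : ι → ℝ} {x : ℝ}
    (h : ∀ i ∈ s, a i < x) : ∃ ε > 0, ∀ t : ℝ, |t| < ε → ∀ i ∈ s, a i + t * b i < x := by
  have hlim : ∀ i ∈ s, ∀ᶠ t in nhds (0 : ℝ), a i + t * b i < x := fun i hi =>
    (by fun_prop : Continuous fun t => a i + t * b i).continuousAt.eventually_lt_const
      (by simpa using h i hi)
  simpa using Metric.eventually_nhds_iff.1 (s.eventually_all.2 hlim)

theorem spread_eigenvalues_projects_to_base_general {n k : ℕ} (hk : 0 < k) (hkn : k < n)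
    {H₀ : Matrix (Fin n) (Fin n) ℂ} (h₀ : H₀ ∈ degenerateSet n k)
    {U : Matrix (Fin n) (Fin n) ℂ} (hU : U ∈ unitaryGroup (Fin n) ℂ)
    (hdiag : U⁻¹ * H₀ * U = diagonal fun i => (eigs H₀ i : ℂ))
    {d : Fin n → ℝ} (hsum : ∑ i, d i = 0) (hsupp : ∀ j : Fin n, k ≤ (j : ℕ) → d j = 0)
    (hgap : ∀ i : Fin n, (i : ℕ) < k → eigs H₀ i + d i < eigs H₀ ⟨k, hkn⟩)
    {H : Matrix (Fin n) (Fin n) ℂ}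
    (hH : H = U * diagonal (fun i => ((eigs H₀ i + d i : ℝ) : ℂ)) * U⁻¹) :
    eigs H ⟨k - 1, by omega⟩ < eigs H ⟨k, hkn⟩ ∧
      (∀ V ∈ unitaryGroup (Fin n) ℂ,
        V⁻¹ * H * V = diagonal (fun i => (eigs H i : ℂ)) → V * LambdaSigma k H * V⁻¹ = H₀) ∧
      ∀ G ∈ degenerateSet n k, G ≠ H₀ → frobNorm (H - H₀) < frobNorm (H - G) := by
  lift U to unitaryGroup (Fin n) ℂ using hU
  have hμ := eigs_add_lt_iff hsupp hgap
  have hH₀ : conjDiagonal U (averageOn (ground n k) (eigs H₀ + d)) = H₀ := by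
    rw [averageOn_eigs_add h₀ hsum hsupp]
    exact conjDiagonal_eq_of_inv_mul_mul_eq hdiag
  obtain rfl : H = conjDiagonal U (eigs H₀ + d) := hH.trans (conjDiagonal_eq_mul_inv U _).symm
  refine ⟨eigs_conjDiagonal_lt_of_mem_of_notMem U hμ (by simp [mem_ground, hk])
    (by simp [mem_ground]), fun V hV hVdiag => ?_, fun G hG hne => ?_⟩
  · lift V to unitaryGroup (Fin n) ℂ using hV
    rw [mul_LambdaSigma_mul_inv_eq_conjDiagonal hkn.le hμ
      (conjDiagonal_eq_of_inv_mul_mul_eq hVdiag), hH₀]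
  · simpa only [hH₀] using
      frobNorm_conjDiagonal_sub_averageOn_lt hk hkn.le U hμ hG (hH₀.symm ▸ hne)

/-- **Lines orthogonal to `Σ_k` obtained by spreading the degenerate eigenvalues linearly
project back to the base point:** for `H₀ ∈ Σ_k`, a diagonalizing unitary `U`, and a nonzero
traceless real diagonal `D` supported on the first `k` entries with increasing diagonal there,
the family `H(t) = U(Λ₀ + tD)U⁻¹` satisfies, for all small `t ≠ 0`:
`λ_k(H(t)) < λ_{k+1}(H(t))`, `(H(t))_Σ = H₀`, and `H₀` is the unique closest point of `Σ_k`
to `H(t)` in Frobenius distance. -/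
theorem spread_eigenvalues_projects_to_base {n k : ℕ} (hk2 : 2 ≤ k) (hkn : k < n)
    (H₀ : Matrix (Fin n) (Fin n) ℂ) (h₀ : H₀ ∈ SigmaSet n k)
    (U : Matrix (Fin n) (Fin n) ℂ) (hU : U ∈ Matrix.unitaryGroup (Fin n) ℂ)
    (hdiag : U⁻¹ * H₀ * U = Matrix.diagonal fun i => (eigs H₀ i : ℂ))
    (D : Fin n → ℝ) (hD0 : D ≠ 0) (htr : ∑ i : Fin n, D i = 0)
    (hsupp : ∀ j : Fin n, k ≤ (j : ℕ) → D j = 0)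
    (hmonoD : ∀ i j : Fin n, i ≤ j → (j : ℕ) < k → D i ≤ D j)
    (Hfam : ℝ → Matrix (Fin n) (Fin n) ℂ)
    (hHfam : ∀ t : ℝ, Hfam t
      = U * Matrix.diagonal (fun i => ((eigs H₀ i + t * D i : ℝ) : ℂ)) * U⁻¹) :
    ∃ ε > 0, ∀ t : ℝ, t ≠ 0 → |t| < ε →
      (eigs (Hfam t) ⟨k - 1, by omega⟩ < eigs (Hfam t) ⟨k, hkn⟩) ∧
      (∀ V ∈ Matrix.unitaryGroup (Fin n) ℂ,
        V⁻¹ * Hfam t * V = Matrix.diagonal (fun i => (eigs (Hfam t) i : ℂ)) →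
        V * LambdaSigma k (Hfam t) * V⁻¹ = H₀) ∧
      ∀ G ∈ SigmaSet n k, G ≠ H₀ → frobNorm (Hfam t - H₀) < frobNorm (Hfam t - G) := by
  obtain ⟨ε, hε, hgap⟩ := exists_pos_forall_abs_lt_add_mul_lt (b := D) (ground n k)
    fun i hi => h₀.2.2 i ⟨k, hkn⟩ (mem_ground.1 hi) rfl
  refine ⟨ε, hε, fun t _ ht => ?_⟩
  have hsum : ∑ i, t * D i = 0 := by rw [← mul_sum, htr, mul_zero]
  have hsupp' : ∀ j : Fin n, k ≤ (j : ℕ) → t * D j = 0 := fun j hj => by rw [hsupp j hj, mul_zero]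
  obtain ⟨hlt, hbase, hclosest⟩ := spread_eigenvalues_projects_to_base_general (by omega) hkn
    (SigmaSet_subset_degenerateSet h₀) hU hdiag hsum hsupp'
    (fun i hi => hgap t ht i (mem_ground.2 hi)) (hHfam t)
  exact ⟨hlt, hbase, fun G hG => hclosest G (SigmaSet_subset_degenerateSet hG)⟩

end
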